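/- Lipschitz estimate for Feynman–Kac semigroups: Assume hypotheses (I) and (C), and let V : X → ℝ be Lipschitz continuous. Then there exists a constant C_V < ∞ such that for every Lipschitz continuous f : X → ℝ, every n ∈ ℕ and all x, x' ∈ X, |Q_n^V f(x) − Q_n^V f(x')| ≤ C_V·‖f‖_L·‖Q_n^V 1‖_∞·d(x,x'), where ‖f‖_L = ‖f‖_∞ + Lip(f). -/

import Mathlib

open MeasureTheory Filter Topology
open scoped ENNReal NNReal

noncomputable def kIter {X : Type*} [MeasurableSpace X] (κ : X → Measure X) : ℕ → X → Measure X
  | 0 => fun x => Measure.dirac x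
  | n + 1 => fun x => (kIter κ n x).bind κ

noncomputable def FK {X : Type*} [MeasurableSpace X] (κ : X → Measure X) (V f : X → ℝ) (x : X) : ℝ :=
  ∫ y, Real.exp (V y) * f y ∂(κ x)

noncomputable def FKiter {X : Type*} [MeasurableSpace X] (κ : X → Measure X) (V : X → ℝ) :
    ℕ → (X → ℝ) → X → ℝ
  | 0 => fun f => f
  | n + 1 => fun f => FK κ V (FKiter κ V n f)

noncomputable def supNorm {X : Type*} (f : X → ℝ) : ℝ := ⨆ x, |f x|

noncomputable def lipConst {X : Type*} [MetricSpace X] (f : X → ℝ) : ℝ :=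
  sSup {c | ∃ x y, x ≠ y ∧ c = |f x - f y| / dist x y}

noncomputable def lipNorm {X : Type*} [MetricSpace X] (f : X → ℝ) : ℝ := supNorm f + lipConst f


/-!
Let `T` be the operator `f ↦ Q^V f`, let `M n = ‖T ^ n 1‖` and let `r` be the exponential growth
rate of `M`. The coupling turns a bound `B` on the slopes of `g` into the bound
`q * T B + K * ‖g‖` on the slopes of `T g`. Since `q < 1`, the operator `(q / r) • T` has spectral
radius less than one, so there is a weight `u ≥ 1` with `(q / r) • T u ≤ u - 1`, and slopes measured
relative to `u` grow no faster than `r ^ n` as long as `‖T ^ k f‖` does.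

It remains to see that `M n / r ^ n` is bounded. At a record `n` of this quotient the slope of
`T ^ n 1` is at most a multiple of `M n`, so irreducibility gives `c * M n ≤ T ^ (N + n) 1`
everywhere and hence `c * M n * M m ≤ M (m + N + n)` for all `m`. Every rate `ρ > r` admits a record
`n` with `M (k + n) ≤ ρ ^ k * M n` for all `k`, so that `c * M m ≤ ρ ^ (m + N)`; now let `ρ → r`.
-/

section Growth

/-- The positive sequence `M` grows like `r ^ n` up to subexponential factors, and `r ^ n` is a
lower bound for it. -/
structure HasGrowthRate (M : ℕ → ℝ) (r : ℝ) : Prop where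
  rate_pos : 0 < r
  pow_le : ∀ n, r ^ n ≤ M n
  tendsto_pow_div : ∀ ρ > r, Tendsto (fun n => ρ ^ n / M n) atTop atTop

/-- The index `n` is a record of `M` relative to the rate `r`: among the values `M k / r ^ k` with
`k ≤ n`, the last one is the largest. -/
def IsRecord (M : ℕ → ℝ) (r : ℝ) (n : ℕ) : Prop :=
  ∀ k ≤ n, M k ≤ M n / r ^ n * r ^ k

variable {M : ℕ → ℝ} {r : ℝ}

theorem HasGrowthRate.pos (h : HasGrowthRate M r) (n : ℕ) : 0 < M n :=
  (pow_pos h.rate_pos n).trans_le (h.pow_le n)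

theorem tendsto_pow_div_atTop_of_eventually_le (hM : ∀ n, 0 < M n) (hr : 0 < r)
    (hMr : ∀ᶠ n in atTop, M n ≤ r ^ n) {ρ : ℝ} (hρ : r < ρ) :
    Tendsto (fun n => ρ ^ n / M n) atTop atTop := by
  refine tendsto_atTop_mono' atTop ?_
    (tendsto_pow_atTop_atTop_of_one_lt ((one_lt_div hr).2 hρ))
  filter_upwards [hMr] with n hn
  rw [div_pow]
  exact div_le_div_of_nonneg_left (pow_nonneg (hr.trans hρ).le n) (hM n) hn

/-- Fekete's lemma in multiplicative form. -/
theorem exists_hasGrowthRate (hM : ∀ m n, M (m + n) ≤ M m * M n) {b : ℝ} (hb : 0 < b)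
    (hbM : ∀ n, b ^ n ≤ M n) : ∃ r, HasGrowthRate M r := by
  have hpos : ∀ n, 0 < M n := fun n => (pow_pos hb n).trans_le (hbM n)
  have hsub : Subadditive fun n => Real.log (M n) := fun m n => by
    rw [← Real.log_mul (hpos m).ne' (hpos n).ne']
    exact Real.log_le_log (hpos _) (hM m n)
  have hbdd : BddBelow (Set.range fun n : ℕ => Real.log (M n) / n) := by
    refine ⟨min 0 (Real.log b), ?_⟩
    rintro _ ⟨n, rfl⟩
    rcases n.eq_zero_or_pos with rfl | hn
    · simp
    · refine (min_le_right _ _).trans ((le_div_iff₀' (by positivity)).2 ?_)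
      rw [← Real.log_pow]
      exact Real.log_le_log (pow_pos hb n) (hbM n)
  have exp_mul_pow : ∀ (s : ℝ) (n : ℕ), Real.exp s ^ n = Real.exp (n * s) :=
    fun s n => (Real.exp_nat_mul s n).symm
  refine ⟨Real.exp hsub.lim, Real.exp_pos _, fun n => ?_, fun ρ hρ => ?_⟩
  · rcases n.eq_zero_or_pos with rfl | hn
    · simpa using hbM 0
    · rw [exp_mul_pow, ← Real.le_log_iff_exp_le (hpos n), ← le_div_iff₀' (by positivity)]
      exact hsub.lim_le_div hbdd hn.ne'
  · have lt_log_iff : ∀ {s}, s < Real.log ρ ↔ Real.exp s < ρ :=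
      Real.lt_log_iff_exp_lt ((Real.exp_pos _).trans hρ)
    obtain ⟨s, hs, hsρ⟩ := exists_between (lt_log_iff.2 hρ)
    refine tendsto_pow_div_atTop_of_eventually_le hpos (Real.exp_pos s) ?_ (lt_log_iff.1 hsρ)
    filter_upwards [(hsub.tendsto_lim hbdd).eventually_le_const hs, eventually_gt_atTop 0]
      with n hn hn0
    rwa [exp_mul_pow, ← Real.log_le_iff_le_exp (hpos n), ← div_le_iff₀' (by positivity)]

/-- The record is a maximum point of `M k / ρ ^ k`, which tends to zero. -/
theorem HasGrowthRate.exists_isRecord (h : HasGrowthRate M r) {ρ : ℝ} (hρ : r < ρ) :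
    ∃ n, IsRecord M r n ∧ ∀ k, M (k + n) ≤ ρ ^ k * M n := by
  have hr := h.rate_pos
  have hρ0 : 0 < ρ := hr.trans hρ
  obtain ⟨n, hn⟩ :=
    (Nat.cofinite_eq_atTop ▸ h.tendsto_pow_div ρ hρ).exists_forall_le
  have max_le : ∀ k, ρ ^ n * M k ≤ ρ ^ k * M n := fun k =>
    (div_le_div_iff₀ (h.pos n) (h.pos k)).1 (hn k)
  refine ⟨n, fun k hk => ?_, fun k => ?_⟩
  · obtain ⟨j, rfl⟩ := Nat.exists_eq_add_of_le hk
    have : r ^ j * M k ≤ M (k + j) := by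
      refine (mul_le_mul_of_nonneg_right (pow_le_pow_left₀ hr.le hρ.le j) (h.pos k).le).trans ?_
      refine le_of_mul_le_mul_left ?_ (pow_pos hρ0 k)
      rw [← mul_assoc, ← pow_add]
      exact max_le k
    rw [pow_add]
    field_simp
    linarith
  · refine le_of_mul_le_mul_left ?_ (pow_pos hρ0 n)
    rw [← mul_assoc, ← pow_add, add_comm n]
    exact max_le (k + n)

theorem HasGrowthRate.mul_le_pow_of_isRecord (h : HasGrowthRate M r) {c : ℝ} {N : ℕ}
    (hrec : ∀ n, IsRecord M r n → ∀ m, c * M n * M m ≤ M (m + N + n)) (m : ℕ) :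
    c * M m ≤ r ^ (m + N) := by
  have hlim : Tendsto (fun ρ : ℝ => ρ ^ (m + N)) (𝓝[>] r) (𝓝 (r ^ (m + N))) :=
    (continuous_pow (m + N)).continuousWithinAt
  refine ge_of_tendsto hlim ?_
  filter_upwards [self_mem_nhdsWithin] with ρ hρ
  obtain ⟨n, hn, hle⟩ := h.exists_isRecord hρ
  refine le_of_mul_le_mul_right ?_ (h.pos n)
  linarith [hrec n hn m, hle (m + N)]

theorem HasGrowthRate.eventually_pow_mul_le (h : HasGrowthRate M r) {q : ℝ} (hq : 0 ≤ q)
    (hq1 : q < 1) {δ : ℝ} (hδ : 0 < δ) : ∀ᶠ n in atTop, (q / r) ^ n * M n ≤ δ := by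
  have hr := h.rate_pos
  have hρ : r < 2 * r / (1 + q) := by rw [lt_div_iff₀ (by positivity)]; nlinarith
  filter_upwards [(h.tendsto_pow_div _ hρ).eventually_ge_atTop δ⁻¹] with n hn
  have hqρ : q / r * (2 * r / (1 + q)) ≤ 1 := by
    field_simp
    linarith
  have hM : M n ≤ δ * (2 * r / (1 + q)) ^ n := by
    rwa [le_div_iff₀ (h.pos n), inv_mul_le_iff₀ hδ] at hn
  calc (q / r) ^ n * M n ≤ (q / r) ^ n * (δ * (2 * r / (1 + q)) ^ n) := by gcongr
    _ = δ * (q / r * (2 * r / (1 + q))) ^ n := by rw [mul_pow]; ring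
    _ ≤ δ * 1 := by
      gcongr
      exact pow_le_one₀ (by positivity) hqρ
    _ = δ := mul_one δ

end Growth

section OrderedModule

variable {R E : Type*} [Semiring R] [AddCommMonoid E] [Preorder E] [Module R E]
  {S T : Module.End R E}

theorem monotone_pow (hT : Monotone T) (n : ℕ) : Monotone ⇑(T ^ n) := by
  rw [Module.End.coe_pow]
  exact hT.iterate n

theorem apply_nonneg (hT : Monotone T) {f : E} (hf : 0 ≤ f) : 0 ≤ T f :=
  map_zero T ▸ hT hf

theorem pow_apply_le_pow_apply (hS : Monotone S) (hT : Monotone T)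
    (hST : ∀ f, 0 ≤ f → S f ≤ T f) {f : E} (hf : 0 ≤ f) (n : ℕ) : (S ^ n) f ≤ (T ^ n) f := by
  induction n with
  | zero => exact le_rfl
  | succ n ih =>
    simp only [pow_succ', Module.End.mul_apply]
    exact (hST _ (apply_nonneg (monotone_pow hS n) hf)).trans (hT ih)

theorem pow_smul_le_pow_apply [PartialOrder R] [IsOrderedRing R] [PosSMulMono R E]
    (hT : Monotone T) {b : R} (hb : 0 ≤ b) {e : E} (hbT : b • e ≤ T e) (n : ℕ) :
    b ^ n • e ≤ (T ^ n) e := by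
  induction n with
  | zero => simp
  | succ n ih =>
    have hstep : T (b ^ n • e) ≤ T ((T ^ n) e) := hT ih
    rw [map_smul] at hstep
    rw [pow_succ b, mul_smul, pow_succ', Module.End.mul_apply]
    exact (smul_le_smul_of_nonneg_left hbT (pow_nonneg hb n)).trans hstep

end OrderedModule

section MonotoneOperator

variable {X : Type*} [TopologicalSpace X] [CompactSpace X] {T : Module.End ℝ C(X, ℝ)}

theorem le_norm_smul_one (f : C(X, ℝ)) : f ≤ ‖f‖ • 1 := fun x => by
  simpa using f.apply_le_norm x

theorem abs_apply_le (hT : Monotone T) (f : C(X, ℝ)) (x : X) : |T f x| ≤ ‖f‖ * T 1 x := by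
  have upper : ∀ g : C(X, ℝ), T g x ≤ ‖g‖ * T 1 x := fun g => by
    simpa using hT (le_norm_smul_one g) x
  refine abs_le'.2 ⟨upper f, ?_⟩
  simpa using upper (-f)

theorem norm_apply_le (hT : Monotone T) (f : C(X, ℝ)) : ‖T f‖ ≤ ‖f‖ * ‖T 1‖ :=
  (ContinuousMap.norm_le _ (by positivity)).2 fun x => (abs_apply_le hT f x).trans
    (mul_le_mul_of_nonneg_left ((T 1).apply_le_norm x) (norm_nonneg f))

theorem norm_pow_add_le (hT : Monotone T) (m n : ℕ) :
    ‖(T ^ (m + n)) 1‖ ≤ ‖(T ^ m) 1‖ * ‖(T ^ n) 1‖ := by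
  rw [pow_add, Module.End.mul_apply, mul_comm]
  exact norm_apply_le (monotone_pow hT m) _

theorem norm_le_norm_of_nonneg_of_le {f g : C(X, ℝ)} (hf : 0 ≤ f) (hfg : f ≤ g) : ‖f‖ ≤ ‖g‖ :=
  (ContinuousMap.norm_le _ (norm_nonneg g)).2 fun x => by
    have hfx : 0 ≤ f x := hf x
    rw [Real.norm_of_nonneg hfx]
    exact (hfg x).trans (g.apply_le_norm x)

theorem pow_le_norm_pow_apply_one [Nonempty X] (hT : Monotone T) {b : ℝ} (hb : 0 ≤ b)
    (hbT : b • 1 ≤ T 1) (n : ℕ) : b ^ n ≤ ‖(T ^ n) 1‖ := by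
  obtain ⟨x⟩ := ‹Nonempty X›
  refine le_trans ?_ (((T ^ n) 1).apply_le_norm x)
  simpa using pow_smul_le_pow_apply hT hb hbT n x

theorem exists_hasGrowthRate_norm_pow_apply_one [Nonempty X] (hT : Monotone T) {b : ℝ}
    (hb : 0 < b) (hbT : b • 1 ≤ T 1) : ∃ r, HasGrowthRate (fun n => ‖(T ^ n) 1‖) r :=
  exists_hasGrowthRate (norm_pow_add_le hT) hb (pow_le_norm_pow_apply_one hT hb.le hbT)

/-- The witness is twice a truncated Neumann series applied to `1`. -/
theorem exists_nonneg_apply_le_sub_one (hT : Monotone T) {m : ℕ} (hm : ‖(T ^ m) 1‖ ≤ 1 / 2) :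
    ∃ u, 0 ≤ u ∧ T u ≤ u - 1 := by
  set s : C(X, ℝ) := (∑ k ∈ Finset.range m, T ^ k) 1 with hs
  have hs0 : 0 ≤ s := by
    rw [hs, LinearMap.sum_apply]
    exact Finset.sum_nonneg fun k _ => apply_nonneg (monotone_pow hT k) zero_le_one
  have hTs : T s - s = (T ^ m) 1 - 1 := LinearMap.congr_fun (mul_geom_sum T m) 1
  refine ⟨(2 : ℝ) • s, smul_nonneg zero_le_two hs0, ContinuousMap.le_def.2 fun x => ?_⟩
  have hTsx : T s x - s x = (T ^ m) 1 x - 1 := DFunLike.congr_fun hTs x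
  have hmx : (T ^ m) 1 x ≤ 1 / 2 := ((T ^ m) 1).apply_le_norm x |>.trans hm
  simp only [map_smul, ContinuousMap.smul_apply, ContinuousMap.sub_apply, ContinuousMap.one_apply,
    smul_eq_mul]
  linarith

end MonotoneOperator

section SlopeBound

variable {X : Type*} [PseudoMetricSpace X]

/-- The function `B` bounds the slopes of `g`: a Lipschitz condition whose constant may depend on
one of the two points. -/
def IsSlopeBound (g B : X → ℝ) : Prop :=
  ∀ x y, |g x - g y| ≤ B x * dist x y

theorem IsSlopeBound.mono {g B B' : X → ℝ} (h : IsSlopeBound g B) (hB : ∀ x, B x ≤ B' x) :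
    IsSlopeBound g B' := fun x y =>
  (h x y).trans (mul_le_mul_of_nonneg_right (hB x) dist_nonneg)

variable [CompactSpace X] {T : Module.End ℝ C(X, ℝ)} {q K : ℝ}

/-- A pointwise Doeblin–Fortet (Lasota–Yorke) inequality: `T` contracts slope bounds by the factor
`q`, up to an error controlled by the supremum norm. -/
def ContractsSlopes (T : Module.End ℝ C(X, ℝ)) (q K : ℝ) : Prop :=
  ∀ g B : C(X, ℝ), 0 ≤ B → IsSlopeBound g B →
    IsSlopeBound (T g) (fun x => q * T B x + K * ‖g‖)

/-- Quantitative irreducibility of a positive operator: some power of `T` spreads a lower bound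
on a ball of radius `ε` over the whole space, with a loss that does not depend on the ball. -/
def IsUniformlyIrreducible (T : Module.End ℝ C(X, ℝ)) : Prop :=
  ∀ ε > 0, ∃ (N : ℕ) (c : ℝ), 0 < c ∧ ∀ g : C(X, ℝ), 0 ≤ g → ∀ a ≥ 0, ∀ y,
    (∀ z ∈ Metric.ball y ε, a ≤ g z) → ∀ x, c * a ≤ (T ^ N) g x

/-- The weight `u` absorbs both the `q`-contraction and the error terms `K * ‖T ^ k f‖`, because
`q • T u ≤ r • (u - 1)`. -/
theorem ContractsSlopes.isSlopeBound_pow (hS : ContractsSlopes T q K) (hK : 0 ≤ K) {r : ℝ}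
    (hr : 0 < r) {u : C(X, ℝ)} (hu1 : 1 ≤ u) (hTu : (q / r) • T u ≤ u - 1) {f : C(X, ℝ)} {L D : ℝ}
    (hL : 0 ≤ L) (hD : 0 ≤ D) (hf : IsSlopeBound f fun _ => L) {n : ℕ}
    (hfn : ∀ k < n, ‖(T ^ k) f‖ ≤ D * r ^ k) :
    IsSlopeBound ((T ^ n) f) fun x => r ^ n * (L + K * D / r) * u x := by
  set E := L + K * D / r with hE
  have hE0 : 0 ≤ E := by positivity
  induction n with
  | zero =>
    have hLE : L ≤ E := le_add_of_nonneg_right (by positivity)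
    exact hf.mono fun x => by simpa using hLE.trans (le_mul_of_one_le_right hE0 (hu1 x))
  | succ n ih =>
    have hB : IsSlopeBound ((T ^ n) f) ((r ^ n * E) • u : C(X, ℝ)) :=
      ih fun k hk => hfn k (hk.trans n.lt_succ_self)
    have hB0 : 0 ≤ (r ^ n * E) • u :=
      smul_nonneg (by positivity) (zero_le_one.trans hu1)
    rw [pow_succ', Module.End.mul_apply]
    refine (hS _ _ hB0 hB).mono fun x => ?_
    have hux : q * T u x ≤ r * (u x - 1) := by
      have hdiv : q / r * T u x ≤ u x - 1 := hTu x
      rwa [div_mul_eq_mul_div, div_le_iff₀' hr] at hdiv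
    have hKD : K * D ≤ r * E := by
      rw [hE, mul_add, mul_div_cancel₀ _ hr.ne']
      exact le_add_of_nonneg_left (by positivity)
    calc q * T ((r ^ n * E) • u) x + K * ‖(T ^ n) f‖
        = r ^ n * E * (q * T u x) + K * ‖(T ^ n) f‖ := by
          rw [map_smul, ContinuousMap.smul_apply, smul_eq_mul]
          ring
      _ ≤ r ^ n * E * (r * (u x - 1)) + K * (D * r ^ n) := by
          gcongr
          exact hfn n n.lt_succ_self
      _ = r ^ (n + 1) * E * u x + r ^ n * (K * D - r * E) := by ring
      _ ≤ r ^ (n + 1) * E * u x :=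
          add_le_of_nonpos_right (mul_nonpos_of_nonneg_of_nonpos (by positivity) (by linarith))

/-- A function with a small slope stays above half its maximum on a ball, which irreducibility
spreads over the whole space. -/
theorem IsUniformlyIrreducible.exists_mul_norm_le [Nonempty X] (hI : IsUniformlyIrreducible T)
    {A : ℝ} (hA : 0 ≤ A) :
    ∃ (N : ℕ) (c : ℝ), 0 < c ∧ ∀ g : C(X, ℝ), 0 ≤ g → (IsSlopeBound g fun _ => A * ‖g‖) →
      (c * ‖g‖) • 1 ≤ (T ^ N) g := by
  obtain ⟨N, c, hc, hspread⟩ := hI (1 / (2 * (A + 1))) (by positivity)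
  refine ⟨N, c / 2, half_pos hc, fun g hg hslope => ContinuousMap.le_def.2 fun x => ?_⟩
  obtain ⟨y, -, hy⟩ := isCompact_univ.exists_isMaxOn Set.univ_nonempty g.continuous.continuousOn
  have hnorm : ‖g‖ ≤ g y := (ContinuousMap.norm_le _ (hg y)).2 fun z => by
    have hgz : 0 ≤ g z := hg z
    rw [Real.norm_of_nonneg hgz]
    exact hy (Set.mem_univ z)
  have half_le : ∀ z ∈ Metric.ball y (1 / (2 * (A + 1))), ‖g‖ / 2 ≤ g z := fun z hz => by
    have hdist : A * dist y z ≤ 1 / 2 := by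
      have : dist y z ≤ 1 / (2 * (A + 1)) := (Metric.mem_ball'.1 hz).le
      rw [le_div_iff₀ (by positivity)] at this
      nlinarith [dist_nonneg (x := y) (y := z)]
    have hdiff : g y - g z ≤ A * ‖g‖ * dist y z := (le_abs_self _).trans (hslope y z)
    nlinarith [norm_nonneg g]
  have := hspread g hg (‖g‖ / 2) (by positivity) y half_le x
  simp only [ContinuousMap.smul_apply, ContinuousMap.one_apply, smul_eq_mul]
  linarith

theorem ContractsSlopes.exists_norm_pow_apply_one_le [Nonempty X]
    (hS : ContractsSlopes T q K) (hI : IsUniformlyIrreducible T) (hT : Monotone T) (hK : 0 ≤ K)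
    {r : ℝ} (hr : HasGrowthRate (fun n => ‖(T ^ n) 1‖) r) {u : C(X, ℝ)} (hu1 : 1 ≤ u)
    (hTu : (q / r) • T u ≤ u - 1) : ∃ D, 0 ≤ D ∧ ∀ n, ‖(T ^ n) 1‖ ≤ D * r ^ n := by
  have hr0 := hr.rate_pos
  have nonneg : ∀ n, 0 ≤ (T ^ n) 1 := fun n => apply_nonneg (monotone_pow hT n) zero_le_one
  have hslope : ∀ n, IsRecord (fun n => ‖(T ^ n) 1‖) r n →
      IsSlopeBound ((T ^ n) 1) fun _ => K / r * ‖u‖ * ‖(T ^ n) 1‖ := fun n hn => by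
    have hone : IsSlopeBound (1 : C(X, ℝ)) fun _ => 0 := fun x y => by simp
    refine (hS.isSlopeBound_pow hK hr0 hu1 hTu le_rfl (by positivity) hone
      fun k hk => hn k hk.le).mono fun x => ?_
    calc r ^ n * (0 + K * (‖(T ^ n) 1‖ / r ^ n) / r) * u x
        = K / r * u x * ‖(T ^ n) 1‖ := by field_simp; ring
      _ ≤ K / r * ‖u‖ * ‖(T ^ n) 1‖ := by gcongr; exact u.apply_le_norm x
  obtain ⟨N, c, hc, hlower⟩ :=
    hI.exists_mul_norm_le (show 0 ≤ K / r * ‖u‖ by positivity)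
  have hrec : ∀ n, IsRecord (fun n => ‖(T ^ n) 1‖) r n → ∀ m,
      c * ‖(T ^ n) 1‖ * ‖(T ^ m) 1‖ ≤ ‖(T ^ (m + N + n)) 1‖ := fun n hn m => by
    have hle := monotone_pow hT m (hlower _ (nonneg n) (hslope n hn))
    rw [map_smul, ← Module.End.mul_apply, ← Module.End.mul_apply, ← pow_add, ← pow_add]
      at hle
    have hnorm := norm_le_norm_of_nonneg_of_le (smul_nonneg (by positivity) (nonneg m)) hle
    rwa [norm_smul, Real.norm_of_nonneg (by positivity)] at hnorm
  refine ⟨r ^ N / c, by positivity, fun m => ?_⟩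
  rw [div_mul_eq_mul_div, le_div_iff₀' hc, ← pow_add, add_comm N]
  exact hr.mul_le_pow_of_isRecord hrec m

theorem HasGrowthRate.exists_weight {r : ℝ}
    (hr : HasGrowthRate (fun n => ‖(T ^ n) 1‖) r) (hT : Monotone T) (hq : 0 ≤ q) (hq1 : q < 1) :
    ∃ u, 1 ≤ u ∧ (q / r) • T u ≤ u - 1 := by
  have hqr : 0 ≤ q / r := div_nonneg hq hr.rate_pos.le
  have hmono : Monotone ((q / r) • T) := fun f g hfg => smul_le_smul_of_nonneg_left (hT hfg) hqr
  obtain ⟨m, hm⟩ := (hr.eventually_pow_mul_le hq hq1 one_half_pos).exists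
  obtain ⟨u, hu0, hu⟩ := exists_nonneg_apply_le_sub_one hmono (m := m) (by
    rwa [smul_pow, LinearMap.smul_apply, norm_smul, Real.norm_of_nonneg (pow_nonneg hqr m)])
  exact ⟨u, sub_nonneg.1 ((apply_nonneg hmono hu0).trans hu), hu⟩

theorem ContractsSlopes.exists_isSlopeBound_pow [Nonempty X] (hS : ContractsSlopes T q K)
    (hI : IsUniformlyIrreducible T) (hT : Monotone T) {b : ℝ} (hb : 0 < b) (hbT : b • 1 ≤ T 1)
    (hq : 0 ≤ q) (hq1 : q < 1) (hK : 0 ≤ K) :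
    ∃ A, ∀ (f : C(X, ℝ)) (L : ℝ), 0 ≤ L → (IsSlopeBound f fun _ => L) →
      ∀ n, IsSlopeBound ((T ^ n) f) fun _ => A * (‖f‖ + L) * ‖(T ^ n) 1‖ := by
  obtain ⟨r, hr⟩ := exists_hasGrowthRate_norm_pow_apply_one hT hb hbT
  obtain ⟨u, hu1, hTu⟩ := hr.exists_weight hT hq hq1
  obtain ⟨D, hD, hTD⟩ := hS.exists_norm_pow_apply_one_le hI hT hK hr hu1 hTu
  have hr0 := hr.rate_pos
  refine ⟨(1 + K * D / r) * ‖u‖, fun f L hL hf n => ?_⟩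
  have hfn : ∀ k < n, ‖(T ^ k) f‖ ≤ ‖f‖ * D * r ^ k := fun k _ => by
    rw [mul_assoc]
    exact (norm_apply_le (monotone_pow hT k) f).trans (by gcongr; exact hTD k)
  refine (hS.isSlopeBound_pow hK hr0 hu1 hTu hL (by positivity) hf hfn).mono fun x => ?_
  have hLf : L + K * (‖f‖ * D) / r ≤ (1 + K * D / r) * (‖f‖ + L) := by
    have : 0 ≤ K * D / r * L := by positivity
    have : K * (‖f‖ * D) / r = K * D / r * ‖f‖ := by ring
    nlinarith [norm_nonneg f]
  calc r ^ n * (L + K * (‖f‖ * D) / r) * u x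
      ≤ ‖(T ^ n) 1‖ * ((1 + K * D / r) * (‖f‖ + L)) * ‖u‖ := by
        gcongr
        · exact zero_le_one.trans (hu1 x)
        · exact hr.pow_le n
        · exact u.apply_le_norm x
    _ = (1 + K * D / r) * ‖u‖ * (‖f‖ + L) * ‖(T ^ n) 1‖ := by ring

end SlopeBound

section Coupling

variable {X : Type*} [PseudoMetricSpace X]

theorem IsSlopeBound.mul {f F g G : X → ℝ} (hf : IsSlopeBound f F) (hg : IsSlopeBound g G)
    {S : ℝ} (hS : ∀ x, |g x| ≤ S) :
    IsSlopeBound (fun x => f x * g x) fun x => |f x| * G x + F x * S := fun x y => by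
  calc |f x * g x - f y * g y|
      = |f x * (g x - g y) + (f x - f y) * g y| := by ring_nf
    _ ≤ |f x| * |g x - g y| + |f x - f y| * |g y| := by
        simpa only [abs_mul] using abs_add_le (f x * (g x - g y)) ((f x - f y) * g y)
    _ ≤ |f x| * (G x * dist x y) + F x * dist x y * S := by
        gcongr
        · exact hg x y
        · exact (abs_nonneg _).trans (hf x y)
        · exact hf x y
        · exact hS y
    _ = (|f x| * G x + F x * S) * dist x y := by ring

theorem exp_sub_exp_le {a v : ℝ} (ha : a ≤ v) (b : ℝ) :
    Real.exp a - Real.exp b ≤ Real.exp v * |a - b| := by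
  have hb : Real.exp b = Real.exp a * Real.exp (b - a) := by rw [← Real.exp_add]; ring_nf
  calc Real.exp a - Real.exp b ≤ Real.exp a * (a - b) := by
        rw [hb]
        nlinarith [Real.exp_pos a, Real.add_one_le_exp (b - a)]
    _ ≤ Real.exp v * |a - b| := by
        refine mul_le_mul_of_nonneg (Real.exp_le_exp.2 ha) ?_ (Real.exp_pos a).le (abs_nonneg _)
        exact le_abs_self (a - b)

theorem isSlopeBound_exp_comp {V : X → ℝ} {K : ℝ≥0} (hV : LipschitzWith K V) {v : ℝ}
    (hv : ∀ x, V x ≤ v) : IsSlopeBound (fun x => Real.exp (V x)) fun _ => Real.exp v * K := by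
  have hle : ∀ x y, Real.exp (V x) - Real.exp (V y) ≤ Real.exp v * K * dist x y := fun x y => by
    rw [mul_assoc]
    exact (exp_sub_exp_le (hv x) (V y)).trans
      (mul_le_mul_of_nonneg_left (hV.dist_le_mul x y) (Real.exp_pos v).le)
  refine fun x y => abs_sub_le_iff.2 ⟨hle x y, ?_⟩
  simpa only [dist_comm] using hle y x

variable [MeasurableSpace X]

/-- The transition laws `κ x` and `κ y` can be coupled so that the distance of the two coordinates
is contracted by the factor `q`, except on an event of probability at most `C * dist x y`. -/
def HasContractiveCoupling (κ : X → Measure X) (q C : ℝ) : Prop :=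
  ∀ x y, ∃ π : Measure (X × X), π.map Prod.fst = κ x ∧ π.map Prod.snd = κ y ∧
    π {z | q * dist x y < dist z.1 z.2} ≤ ENNReal.ofReal (C * dist x y)

variable [OpensMeasurableSpace X] [SecondCountableTopology X]

theorem measurableSet_lt_dist (r : ℝ) : MeasurableSet {z : X × X | r < dist z.1 z.2} :=
  measurableSet_lt measurable_const (measurable_fst.dist measurable_snd)

theorem hasContractiveCoupling_of_map {Ω : Type*} [MeasurableSpace Ω] {P : Measure Ω}
    {κ : X → Measure X} {q C : ℝ} {R R' : X → X → Ω → X} (hR : ∀ x y, Measurable (R x y))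
    (hR' : ∀ x y, Measurable (R' x y)) (hRκ : ∀ x y, P.map (R x y) = κ x)
    (hR'κ : ∀ x y, P.map (R' x y) = κ y)
    (hdist : ∀ x y, P {ω | q * dist x y < dist (R x y ω) (R' x y ω)} ≤
      ENNReal.ofReal (C * dist x y)) :
    HasContractiveCoupling κ q C := fun x y => by
  have hRR' : Measurable fun ω => (R x y ω, R' x y ω) := (hR x y).prodMk (hR' x y)
  refine ⟨P.map fun ω => (R x y ω, R' x y ω), ?_, ?_, ?_⟩
  · rw [Measure.map_map measurable_fst hRR']
    exact hRκ x y
  · rw [Measure.map_map measurable_snd hRR']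
    exact hR'κ x y
  · rw [Measure.map_apply hRR' (measurableSet_lt_dist _)]
    exact hdist x y

theorem abs_integral_fst_sub_integral_snd_le {π : Measure (X × X)} [IsFiniteMeasure π]
    {g B : X → ℝ} {r S : ℝ} (hr : 0 ≤ r) (hB : 0 ≤ B) (hslope : IsSlopeBound g B)
    (hS : ∀ x, |g x| ≤ S) (hg₁ : Integrable (fun z => g z.1) π)
    (hg₂ : Integrable (fun z => g z.2) π) (hB₁ : Integrable (fun z => B z.1) π) :
    |∫ z, g z.1 ∂π - ∫ z, g z.2 ∂π| ≤
      r * ∫ z, B z.1 ∂π + 2 * S * π.real {z | r < dist z.1 z.2} := by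
  set far := {z : X × X | r < dist z.1 z.2}
  have hfar : MeasurableSet far := measurableSet_lt_dist r
  have hind : Integrable (far.indicator fun _ => 2 * S) π :=
    (integrable_const (2 * S)).indicator hfar
  have pointwise : ∀ z : X × X, |g z.1 - g z.2| ≤ r * B z.1 + far.indicator (fun _ => 2 * S) z := by
    intro z
    by_cases hz : z ∈ far
    · rw [Set.indicator_of_mem hz]
      linarith [abs_sub (g z.1) (g z.2), hS z.1, hS z.2, mul_nonneg hr (hB z.1)]
    · rw [Set.indicator_of_notMem hz, add_zero, mul_comm]
      exact (hslope _ _).trans (mul_le_mul_of_nonneg_left (not_lt.1 hz) (hB z.1))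
  calc |∫ z, g z.1 ∂π - ∫ z, g z.2 ∂π| = |∫ z, (g z.1 - g z.2) ∂π| := by
        rw [integral_sub hg₁ hg₂]
    _ ≤ ∫ z, |g z.1 - g z.2| ∂π := abs_integral_le_integral_abs
    _ ≤ ∫ z, (r * B z.1 + far.indicator (fun _ => 2 * S) z) ∂π :=
        integral_mono (hg₁.sub hg₂).abs ((hB₁.const_mul r).add hind) pointwise
    _ = r * ∫ z, B z.1 ∂π + 2 * S * π.real far := by
        rw [integral_add (hB₁.const_mul r) hind, integral_const_mul,
          integral_indicator_const _ hfar, smul_eq_mul, mul_comm (π.real far)]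

end Coupling

section FeynmanKac

open ProbabilityTheory

variable {X : Type*} [TopologicalSpace X] [CompactSpace X] [MeasurableSpace X]

theorem integrable_continuousMap [OpensMeasurableSpace X] (μ : Measure X) [IsFiniteMeasure μ]
    (f : C(X, ℝ)) : Integrable f μ :=
  f.continuous.integrable_of_hasCompactSupport (.of_compactSpace f)

/-- The Feller property: the kernel maps continuous functions to continuous functions. -/
def IsFeller (κ : Kernel X X) : Prop :=
  ∀ f : X → ℝ, Continuous f → Continuous fun x => ∫ y, f y ∂(κ x)

variable [BorelSpace X] {κ : Kernel X X} [IsMarkovKernel κ]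

theorem integrable_exp_mul (V f : C(X, ℝ)) (x : X) :
    Integrable (fun y => Real.exp (V y) * f y) (κ x) :=
  integrable_continuousMap (κ x) ⟨fun y => Real.exp (V y) * f y, by fun_prop⟩

/-- The Feynman–Kac operator of a Feller kernel on the space of continuous functions. -/
noncomputable def fkOperator (hκ : IsFeller κ) (V : C(X, ℝ)) : Module.End ℝ C(X, ℝ) where
  toFun f := ⟨FK κ V f, hκ _ (by fun_prop)⟩
  map_add' f g := by
    ext x
    refine Eq.trans ?_ (integral_add (integrable_exp_mul V f x) (integrable_exp_mul V g x))
    exact integral_congr_ae (.of_forall fun y => mul_add _ _ _)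
  map_smul' c f := by
    ext x
    refine Eq.trans ?_ (integral_const_mul c fun y => Real.exp (V y) * f y)
    exact integral_congr_ae (.of_forall fun y => mul_left_comm _ _ _)

theorem fkOperator_apply (hκ : IsFeller κ) (V f : C(X, ℝ)) (x : X) :
    fkOperator hκ V f x = ∫ y, Real.exp (V y) * f y ∂(κ x) :=
  rfl

theorem coe_fkOperator_pow (hκ : IsFeller κ) (V f : C(X, ℝ)) (n : ℕ) :
    ⇑((fkOperator hκ V ^ n) f) = FKiter κ V n f := by
  induction n with
  | zero => rfl
  | succ n ih =>
    rw [pow_succ', Module.End.mul_apply]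
    exact congrArg (FK κ V) ih

theorem monotone_fkOperator (hκ : IsFeller κ) (V : C(X, ℝ)) : Monotone (fkOperator hκ V) :=
  fun f g hfg x => integral_mono (integrable_exp_mul V f x) (integrable_exp_mul V g x)
    fun y => mul_le_mul_of_nonneg_left (hfg y) (Real.exp_pos _).le

theorem fkOperator_zero_one (hκ : IsFeller κ) : fkOperator hκ 0 1 = 1 := by
  ext x
  simp [fkOperator_apply]

theorem exp_neg_norm_smul_le_fkOperator (hκ : IsFeller κ) (V : C(X, ℝ)) {f : C(X, ℝ)}
    (hf : 0 ≤ f) : Real.exp (-‖V‖) • fkOperator hκ 0 f ≤ fkOperator hκ V f :=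
  ContinuousMap.le_def.2 fun x => by
    rw [ContinuousMap.smul_apply, smul_eq_mul, fkOperator_apply, ← integral_const_mul]
    refine integral_mono ((integrable_exp_mul 0 f x).const_mul _) (integrable_exp_mul V f x)
      fun y => ?_
    have hV : Real.exp (-‖V‖) ≤ Real.exp (V y) := Real.exp_le_exp.2 (V.neg_norm_le_apply y)
    simpa using mul_le_mul_of_nonneg_right hV (hf y)

theorem exp_neg_norm_pow_smul_le_fkOperator_pow (hκ : IsFeller κ) (V : C(X, ℝ)) {f : C(X, ℝ)}
    (hf : 0 ≤ f) (n : ℕ) :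
    Real.exp (-‖V‖) ^ n • (fkOperator hκ 0 ^ n) f ≤ (fkOperator hκ V ^ n) f := by
  have hmono : Monotone (Real.exp (-‖V‖) • fkOperator hκ 0) := fun f g hfg =>
    smul_le_smul_of_nonneg_left (monotone_fkOperator hκ 0 hfg) (Real.exp_pos _).le
  rw [← LinearMap.smul_apply, ← smul_pow]
  exact pow_apply_le_pow_apply hmono (monotone_fkOperator hκ V)
    (fun g => exp_neg_norm_smul_le_fkOperator hκ V) hf n

theorem isProbabilityMeasure_kIter {X : Type*} [MeasurableSpace X] (κ : Kernel X X)
    [IsMarkovKernel κ] (n : ℕ) (x : X) : IsProbabilityMeasure (kIter κ n x) := by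
  induction n with
  | zero => exact Measure.dirac.isProbabilityMeasure
  | succ n ih => exact isProbabilityMeasure_bind κ.aemeasurable (.of_forall fun _ => inferInstance)

theorem integral_bind_kernel {X Y E : Type*} [MeasurableSpace X] [MeasurableSpace Y]
    [NormedAddCommGroup E] [NormedSpace ℝ E] {μ : Measure X} {κ : Kernel X Y} {f : Y → E}
    (hf : Integrable f (μ.bind κ)) :
    ∫ y, f y ∂(μ.bind κ) = ∫ x, ∫ y, f y ∂(κ x) ∂μ :=
  Kernel.integral_comp (κ := Kernel.const Unit μ) (a := ()) hf

theorem integral_kIter (hκ : IsFeller κ) (f : C(X, ℝ)) (n : ℕ) (x : X) :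
    ∫ y, f y ∂(kIter κ n x) = (fkOperator hκ 0 ^ n) f x := by
  induction n generalizing f with
  | zero => exact integral_dirac' _ _ f.continuous.stronglyMeasurable
  | succ n ih =>
    have := isProbabilityMeasure_kIter κ (n + 1) x
    have hint : Integrable f ((kIter κ n x).bind κ) :=
      integrable_continuousMap (kIter κ (n + 1) x) f
    rw [pow_succ, Module.End.mul_apply, ← ih]
    refine (integral_bind_kernel hint).trans (integral_congr_ae (.of_forall fun y => ?_))
    simp [fkOperator_apply]

end FeynmanKac

section MetricFeynmanKac

open ProbabilityTheory

variable {X : Type*} [PseudoMetricSpace X] [CompactSpace X] [MeasurableSpace X] [BorelSpace X]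
  {κ : Kernel X X} [IsMarkovKernel κ]

theorem isUniformlyIrreducible_fkOperator [Nonempty X] (hκ : IsFeller κ)
    (hI : ∀ ε : ℝ, 0 < ε → ∃ (N : ℕ) (p : ℝ≥0∞), 0 < p ∧
      ∀ x y : X, p < kIter κ N x (Metric.ball y ε)) (V : C(X, ℝ)) :
    IsUniformlyIrreducible (fkOperator hκ V) := fun ε hε => by
  obtain ⟨N, p, hp, hpκ⟩ := hI ε hε
  obtain ⟨x₀⟩ := ‹Nonempty X›
  have hp' : 0 < p.toReal := ENNReal.toReal_pos hp.ne' (hpκ x₀ x₀).ne_top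
  refine ⟨N, Real.exp (-‖V‖) ^ N * p.toReal, by positivity, fun g hg a ha y hball x => ?_⟩
  have := isProbabilityMeasure_kIter κ N x
  have hpa : p.toReal ≤ (kIter κ N x).real {z | a ≤ g z} :=
    (ENNReal.toReal_mono (measure_ne_top _ _) (hpκ x y).le).trans (measureReal_mono hball)
  have hint : p.toReal * a ≤ (fkOperator hκ 0 ^ N) g x := by
    rw [← integral_kIter, mul_comm]
    exact (mul_le_mul_of_nonneg_left hpa ha).trans (mul_meas_ge_le_integral_of_nonneg
      (.of_forall hg) (integrable_continuousMap _ g) a)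
  have hle : Real.exp (-‖V‖) ^ N * (fkOperator hκ 0 ^ N) g x ≤ (fkOperator hκ V ^ N) g x :=
    exp_neg_norm_pow_smul_le_fkOperator_pow hκ V hg N x
  rw [mul_assoc]
  exact (mul_le_mul_of_nonneg_left hint (by positivity)).trans hle

theorem HasContractiveCoupling.abs_integral_sub_integral_le {q C : ℝ}
    (hcouple : HasContractiveCoupling κ q C) (hq : 0 ≤ q) (hC : 0 ≤ C) {g B : C(X, ℝ)}
    (hB : 0 ≤ B) (hslope : IsSlopeBound g B) (x y : X) :
    |∫ z, g z ∂(κ x) - ∫ z, g z ∂(κ y)| ≤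
      (q * ∫ z, B z ∂(κ x) + 2 * ‖g‖ * C) * dist x y := by
  obtain ⟨π, hπ₁, hπ₂, hπ⟩ := hcouple x y
  have : IsProbabilityMeasure π := by
    have : IsProbabilityMeasure (π.map Prod.fst) := hπ₁ ▸ inferInstance
    exact Measure.isProbabilityMeasure_of_map Prod.fst
  have integral_fst : ∀ f : C(X, ℝ), ∫ z, f z ∂(κ x) = ∫ z, f z.1 ∂π := fun f => by
    rw [← hπ₁, integral_map measurable_fst.aemeasurable f.continuous.aestronglyMeasurable]
  have integral_snd : ∀ f : C(X, ℝ), ∫ z, f z ∂(κ y) = ∫ z, f z.2 ∂π := fun f => by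
    rw [← hπ₂, integral_map measurable_snd.aemeasurable f.continuous.aestronglyMeasurable]
  have hfar : π.real {z | q * dist x y < dist z.1 z.2} ≤ C * dist x y :=
    ENNReal.toReal_le_of_le_ofReal (by positivity) hπ
  rw [integral_fst g, integral_fst B, integral_snd g]
  refine (abs_integral_fst_sub_integral_snd_le (r := q * dist x y) (B := B) (by positivity) hB
    hslope g.norm_coe_le_norm
    (integrable_continuousMap π (g.comp ⟨Prod.fst, continuous_fst⟩))
    (integrable_continuousMap π (g.comp ⟨Prod.snd, continuous_snd⟩))
    (integrable_continuousMap π (B.comp ⟨Prod.fst, continuous_fst⟩))).trans ?_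
  nlinarith [mul_le_mul_of_nonneg_left hfar (norm_nonneg g)]

theorem HasContractiveCoupling.contractsSlopes_fkOperator {q C : ℝ}
    (hcouple : HasContractiveCoupling κ q C) (hκ : IsFeller κ) (hq : 0 ≤ q) (hC : 0 ≤ C)
    {V : C(X, ℝ)} {K : ℝ≥0} (hV : LipschitzWith K V) :
    ContractsSlopes (fkOperator hκ V) q (Real.exp ‖V‖ * (q * K + 2 * C)) := fun g B hB hgB x y => by
  have exp_le : ∀ z, Real.exp (V z) ≤ Real.exp ‖V‖ := fun z =>
    Real.exp_le_exp.2 (V.apply_le_norm z)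
  let G : C(X, ℝ) := ⟨fun z => Real.exp (V z) * g z, by fun_prop⟩
  let B' : C(X, ℝ) := ⟨fun z => Real.exp (V z) * B z + Real.exp ‖V‖ * K * ‖g‖, by fun_prop⟩
  have hB' : 0 ≤ B' := fun z => add_nonneg (mul_nonneg (Real.exp_pos _).le (hB z)) (by positivity)
  have hGB' : IsSlopeBound G B' :=
    ((isSlopeBound_exp_comp hV V.apply_le_norm).mul hgB g.norm_coe_le_norm).mono fun z => by
      rw [abs_of_pos (Real.exp_pos _)]
      rfl
  have hG : ‖G‖ ≤ Real.exp ‖V‖ * ‖g‖ := (ContinuousMap.norm_le _ (by positivity)).2 fun z => by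
    rw [ContinuousMap.coe_mk, norm_mul, Real.norm_of_nonneg (Real.exp_pos _).le]
    exact mul_le_mul (exp_le z) (g.norm_coe_le_norm z) (norm_nonneg _) (Real.exp_pos _).le
  have integral_B' : ∫ z, B' z ∂(κ x) = fkOperator hκ V B x + Real.exp ‖V‖ * K * ‖g‖ := by
    rw [fkOperator_apply]
    refine (integral_add (integrable_exp_mul V B x) (integrable_const _)).trans ?_
    simp
  refine (hcouple.abs_integral_sub_integral_le hq hC hB' hGB' x y).trans ?_
  gcongr
  rw [integral_B']
  nlinarith

end MetricFeynmanKac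

section Norms

variable {X : Type*}

theorem supNorm_coe [TopologicalSpace X] [CompactSpace X] (f : C(X, ℝ)) : supNorm f = ‖f‖ :=
  f.norm_eq_iSup_norm.symm

variable [MetricSpace X] {f : X → ℝ}

theorem lipConst_nonneg (f : X → ℝ) : 0 ≤ lipConst f := by
  refine Real.sSup_nonneg ?_
  rintro _ ⟨x, y, -, rfl⟩
  positivity

theorem isSlopeBound_lipConst {K : ℝ≥0} (hf : LipschitzWith K f) :
    IsSlopeBound f fun _ => lipConst f := fun x y => by
  rcases eq_or_ne x y with rfl | hxy
  · simp
  · rw [← div_le_iff₀ (dist_pos.2 hxy)]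
    refine le_csSup ⟨K, ?_⟩ ⟨x, y, hxy, rfl⟩
    rintro _ ⟨a, b, hab, rfl⟩
    exact (div_le_iff₀ (dist_pos.2 hab)).2 (hf.dist_le_mul a b)

end Norms

/-- Lipschitz estimate for Feynman–Kac semigroups: under hypotheses (I)
and (C), for Lipschitz `V` there is `C_V < ∞` with
`|Q_n^V f(x) − Q_n^V f(x')| ≤ C_V·‖f‖_L·‖Q_n^V 1‖_∞·d(x,x')` for all Lipschitz `f`. -/
theorem FK_lipschitz_estimate
    {X : Type*} [MetricSpace X] [CompactSpace X] [MeasurableSpace X] [BorelSpace X]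
    (κ : X → Measure X) (hκmeas : Measurable κ)
    (hκprob : ∀ x, IsProbabilityMeasure (κ x))
    (hFeller : ∀ f : X → ℝ, Continuous f → Continuous fun x => ∫ y, f y ∂(κ x))
    -- hypothesis (I): uniform irreducibility
    (hI : ∀ ε : ℝ, 0 < ε → ∃ (N : ℕ) (p : ℝ≥0∞), 0 < p ∧
      ∀ x y : X, p < kIter κ N x (Metric.ball y ε))
    -- hypothesis (C): coupling
    {Ω₀ : Type*} [MeasurableSpace Ω₀] (P₀ : Measure Ω₀) [IsProbabilityMeasure P₀]
    (q : ℝ) (hq0 : 0 ≤ q) (hq1 : q < 1) (C : ℝ) (hC : 0 < C)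
    (R R' : X → X → Ω₀ → X)
    (hRmeas : Measurable fun p : (X × X) × Ω₀ => R p.1.1 p.1.2 p.2)
    (hR'meas : Measurable fun p : (X × X) × Ω₀ => R' p.1.1 p.1.2 p.2)
    (hRlaw : ∀ x x' : X, Measure.map (R x x') P₀ = κ x)
    (hR'law : ∀ x x' : X, Measure.map (R' x x') P₀ = κ x')
    (hcouple : ∀ x x' : X,
      P₀ {ω | q * dist x x' < dist (R x x' ω) (R' x x' ω)} ≤ ENNReal.ofReal (C * dist x x'))
    (V : X → ℝ) (KV : ℝ≥0) (hV : LipschitzWith KV V) :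
    ∃ CV : ℝ, ∀ (f : X → ℝ) (Kf : ℝ≥0), LipschitzWith Kf f →
      ∀ (n : ℕ) (x x' : X),
        |FKiter κ V n f x - FKiter κ V n f x'|
          ≤ CV * lipNorm f * supNorm (FKiter κ V n 1) * dist x x' := by
  rcases isEmpty_or_nonempty X with _ | _
  · exact ⟨0, fun _ _ _ _ x => isEmptyElim x⟩
  let k : ProbabilityTheory.Kernel X X := ⟨κ, hκmeas⟩
  have : ProbabilityTheory.IsMarkovKernel k := ⟨hκprob⟩
  have hk : IsFeller k := hFeller
  let W : C(X, ℝ) := ⟨V, hV.continuous⟩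
  have hcoupling : HasContractiveCoupling k q C :=
    hasContractiveCoupling_of_map (R := R) (R' := R')
      (fun x x' => hRmeas.comp (measurable_prodMk_left (x := (x, x'))))
      (fun x x' => hR'meas.comp (measurable_prodMk_left (x := (x, x')))) hRlaw hR'law hcouple
  have hone : Real.exp (-‖W‖) • 1 ≤ fkOperator hk W 1 := by
    simpa only [fkOperator_zero_one] using exp_neg_norm_smul_le_fkOperator hk W zero_le_one
  obtain ⟨A, hA⟩ :=
    (hcoupling.contractsSlopes_fkOperator hk hq0 hC.le hV).exists_isSlopeBound_pow
      (isUniformlyIrreducible_fkOperator hk hI W) (monotone_fkOperator hk W) (Real.exp_pos _) hone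
      hq0 hq1 (by positivity)
  refine ⟨A, fun f Kf hf n x x' => ?_⟩
  let F : C(X, ℝ) := ⟨f, hf.continuous⟩
  have hslope := hA F (lipConst f) (lipConst_nonneg f) (isSlopeBound_lipConst hf) n x x'
  rwa [coe_fkOperator_pow, ← supNorm_coe, ← supNorm_coe, coe_fkOperator_pow] at hslope
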